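/- For all integers $k, n \geq 1$, the determinant of the adjacency matrix of the hexagonal grid $H_{n,k}$ equals $(-1)^{kn+n+k} \binom{n+k}{n}^2$. -/

import Mathlib

/-- A pair `p = (i, j)` is a vertex `vⱼⁱ` of the hexagonal grid `H_{n,m}`: either
`1 ≤ i ≤ m` and `1 ≤ j ≤ 2n+2` (rows `1, …, m` are paths on `2n+2` vertices), or
`i = m+1` and `2 ≤ j ≤ 2n+1` (row `m+1` is a path on `2n` vertices). -/
def hexVertex (n m : ℕ) (p : ℕ × ℕ) : Prop :=
  (1 ≤ p.1 ∧ p.1 ≤ m ∧ 1 ≤ p.2 ∧ p.2 ≤ 2 * n + 2) ∨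
  (p.1 = m + 1 ∧ 2 ≤ p.2 ∧ p.2 ≤ 2 * n + 1)

instance (n m : ℕ) : DecidablePred (hexVertex n m) := fun p => by
  unfold hexVertex; infer_instance

/-- The vertex set of the hexagonal grid `H_{n,m}` as a finite set of pairs. -/
def hexVerts (n m : ℕ) : Finset (ℕ × ℕ) :=
  (Finset.range (m + 2) ×ˢ Finset.range (2 * n + 3)).filter (hexVertex n m)

/-- Adjacency in the hexagonal grid `H_{n,m}` (for pairs `(row, column)` belonging to
the vertex set): horizontal edges `vⱼⁱ v_{j+1}ⁱ` between consecutive columns of the same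
row, and vertical edges `v₂^{i+1} v₁ⁱ` and `v_{2k+1}^{i+1} v_{2k+2}ⁱ` for `1 ≤ k ≤ n`. -/
def hexAdj (n : ℕ) (p q : ℕ × ℕ) : Prop :=
  (p.1 = q.1 ∧ (p.2 + 1 = q.2 ∨ q.2 + 1 = p.2)) ∨
  (p.1 = q.1 + 1 ∧
    ((q.2 = 1 ∧ p.2 = 2) ∨ ∃ k, 1 ≤ k ∧ k ≤ n ∧ q.2 = 2 * k + 2 ∧ p.2 = 2 * k + 1)) ∨
  (q.1 = p.1 + 1 ∧
    ((p.2 = 1 ∧ q.2 = 2) ∨ ∃ k, 1 ≤ k ∧ k ≤ n ∧ p.2 = 2 * k + 2 ∧ q.2 = 2 * k + 1))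

/-- The (0-1) adjacency matrix of the hexagonal grid `H_{n,m}`, indexed by its
vertices. -/
noncomputable def hexMatrix (n m : ℕ) :
    Matrix {p // p ∈ hexVerts n m} {p // p ∈ hexVerts n m} ℝ :=
  open scoped Classical in
  fun p q => if hexAdj n p.1 q.1 then 1 else 0

open Matrix in
theorem hexaux_det_swap {P : Type*} [Fintype P] [DecidableEq P] (W : Matrix P P ℝ) :
    (fromBlocks 0 W Wᵀ 0).det = (-1 : ℝ) ^ Fintype.card P * W.det ^ 2 := by
  have h1 : (fromBlocks (1 : Matrix P P ℝ) 1 0 1) * fromBlocks 0 W Wᵀ 0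
      = fromBlocks 1 W 1 0 * fromBlocks Wᵀ 0 0 1 := by
    simp [fromBlocks_multiply]
  have h2 := congrArg det h1
  rw [det_mul, det_mul, det_fromBlocks_zero₂₁, det_fromBlocks_zero₂₁, det_fromBlocks_one₁₁] at h2
  simp [det_neg] at h2
  rw [h2]; ring

/-- The unitriangular Pascal matrix. -/
def hexU (m n : ℕ) : Matrix (Fin (m+1) × Fin (n+1)) (Fin (m+1) × Fin (n+1)) ℝ := fun r c =>
  if (r.1.val = c.1.val ∧ r.2.val = c.2.val) ∨ (r.1.val = c.1.val ∧ r.2.val = c.2.val + 1) ∨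
    (r.1.val = c.1.val + 1 ∧ r.2.val = c.2.val) then 1 else 0

theorem hexU_det (m n : ℕ) : (hexU m n).det = 1 := by
  have h : ((hexU m n).submatrix (ofLex : (Fin (m+1) ×ₗ Fin (n+1)) ≃ _) ofLex).det
    = (hexU m n).det := Matrix.det_submatrix_equiv_self _ _
  rw [← h, Matrix.det_of_lowerTriangular]
  · simp [hexU]
  · intro i j hij
    have hij' : i < j := hij
    rw [Prod.Lex.lt_iff] at hij'
    simp only [Matrix.submatrix_apply, hexU]
    rw [if_neg]
    simp only [Fin.lt_def, Fin.ext_iff] at hij'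
    omega

/-- The solution vector. -/
def hexX (m n : ℕ) : Fin (m+1) × Fin (n+1) → ℝ := fun c =>
  (-1) ^ (c.1.val + c.2.val) * ((c.1.val + c.2.val).choose c.2.val : ℝ)

theorem hexU_mulVec (m n : ℕ) : (hexU m n).mulVec (hexX m n) = Pi.single (0, 0) 1 := by
  ext ⟨⟨i, hi⟩, ⟨b, hb⟩⟩
  simp only [Matrix.mulVec, dotProduct, hexU]
  have key : ∀ c : Fin (m+1) × Fin (n+1),
    (if (i = c.1.val ∧ b = c.2.val) ∨ (i = c.1.val ∧ b = c.2.val + 1) ∨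
      (i = c.1.val + 1 ∧ b = c.2.val) then (1:ℝ) else 0) * hexX m n c =
    (if c = (⟨i, hi⟩, ⟨b, hb⟩) then hexX m n c else 0)
    + (if c = (⟨i, hi⟩, ⟨b - 1, by omega⟩) then (if 1 ≤ b then hexX m n c else 0) else 0)
    + (if c = (⟨i - 1, by omega⟩, ⟨b, hb⟩) then (if 1 ≤ i then hexX m n c else 0) else 0) := by
    rintro ⟨⟨x, hx⟩, ⟨y, hy⟩⟩
    simp only [Prod.mk.injEq, Fin.mk.injEq]
    split_ifs <;> first | omega | simp
  rw [Finset.sum_congr rfl (fun c _ => key c)]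
  simp only [Finset.sum_add_distrib, Finset.sum_ite_eq', Finset.mem_univ, if_true, hexX]
  rcases i with _ | i <;> rcases b with _ | b
  · simp
  · rw [Pi.single_eq_of_ne (by simp [Prod.ext_iff, Fin.ext_iff])]
    simp; ring
  · rw [Pi.single_eq_of_ne (by simp [Prod.ext_iff, Fin.ext_iff])]
    simp; ring
  · rw [Pi.single_eq_of_ne (by simp [Prod.ext_iff, Fin.ext_iff])]
    have : (i + 1 + (b + 1)).choose (b + 1) = (i + 1 + b).choose b + (i + (b + 1)).choose (b+1) := by
      rw [show i + 1 + (b+1) = (i + 1 + b) + 1 by ring, Nat.choose_succ_succ,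
        show i + 1 + b = i + (b+1) by ring]
    simp [this]; ring

/-- Bordered matrix. -/
def hexW (m n : ℕ) : Matrix (Fin (m+1) × Fin (n+1)) (Fin (m+1) × Fin (n+1)) ℝ :=
  (hexU m n).updateRow (0, 0) (Pi.single (Fin.last m, Fin.last n) 1)

theorem hexW_det (m n : ℕ) : (hexW m n).det = (-1) ^ (m + n) * ((m + n).choose n : ℝ) := by
  rw [hexW, ← Matrix.adjugate_apply]
  have h : (hexU m n).adjugate.mulVec ((hexU m n).mulVec (hexX m n)) = hexX m n := by
    rw [Matrix.mulVec_mulVec, Matrix.adjugate_mul, hexU_det]; simp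
  rw [hexU_mulVec] at h
  have h2 := congrFun h (Fin.last m, Fin.last n)
  simpa [hexX] using h2

theorem hexW_apply (m n : ℕ) (r c : Fin (m+1) × Fin (n+1)) : hexW m n r c =
    if r.1.val = 0 ∧ r.2.val = 0 then (if c.1.val = m ∧ c.2.val = n then 1 else 0)
    else hexU m n r c := by
  simp only [hexW, Matrix.updateRow_apply, Pi.single_apply, Prod.ext_iff, Fin.ext_iff]
  rfl

theorem mem_hexVerts' (n m : ℕ) (p : ℕ × ℕ) : p ∈ hexVerts n m ↔ hexVertex n m p := by
  simp only [hexVerts, Finset.mem_filter, Finset.mem_product, Finset.mem_range, hexVertex]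
  omega

/-- The vertex embedding. -/
def hexF (n m : ℕ) (p : {p // p ∈ hexVerts n m}) :
    (Fin (m+1) × Fin (n+1)) ⊕ (Fin (m+1) × Fin (n+1)) :=
  have hp := (mem_hexVerts' n m p.1).1 p.2
  if h : p.1.2 % 2 = 1 then
    Sum.inl (⟨if p.1.2 = 1 then p.1.1 else p.1.1 - 1, by
      unfold hexVertex at hp; split_ifs <;> omega⟩, ⟨p.1.2 / 2, by unfold hexVertex at hp; omega⟩)
  else
    Sum.inr (⟨p.1.1 - 1, by unfold hexVertex at hp; omega⟩,
      ⟨p.1.2 / 2 - 1, by unfold hexVertex at hp; omega⟩)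

/-- The extended embedding. -/
def hexG (n m : ℕ) : {p // p ∈ hexVerts n m} ⊕ Fin 2 →
    (Fin (m+1) × Fin (n+1)) ⊕ (Fin (m+1) × Fin (n+1)) :=
  Sum.elim (hexF n m) ![Sum.inl (0, 0), Sum.inr (Fin.last m, Fin.last n)]

theorem hexG_bij (n m : ℕ) : Function.Bijective (hexG n m) := by
  constructor
  · rintro (⟨⟨i, j⟩, hp⟩ | x) (⟨⟨i', j'⟩, hp'⟩ | y) h
    · rw [mem_hexVerts'] at hp hp'
      simp only [hexVertex] at hp hp'
      simp only [hexG, Sum.elim_inl, hexF] at h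
      simp only [Sum.inl.injEq, Subtype.mk.injEq, Prod.mk.injEq]
      by_cases hj : j % 2 = 1 <;> by_cases hj' : j' % 2 = 1 <;>
        simp only [hj, hj', dif_pos, dif_neg, not_false_eq_true, Sum.inl.injEq, Sum.inr.injEq,
          Prod.mk.injEq, Fin.mk.injEq, reduceCtorEq] at h <;>
        (try split_ifs at h) <;> omega
    · exfalso
      rw [mem_hexVerts'] at hp
      simp only [hexVertex] at hp
      fin_cases y <;> simp [hexG, hexF] at h <;> split_ifs at h <;>
        simp [Fin.ext_iff] at h <;> omega
    · exfalso
      rw [mem_hexVerts'] at hp'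
      simp only [hexVertex] at hp'
      fin_cases x <;> simp [hexG, hexF] at h <;> split_ifs at h <;>
        simp [Fin.ext_iff] at h <;> omega
    · fin_cases x <;> fin_cases y <;> simp [hexG] at h ⊢
  · rintro (⟨⟨x, hx⟩, ⟨y, hy⟩⟩ | ⟨⟨x, hx⟩, ⟨y, hy⟩⟩)
    · by_cases h0 : x = 0 ∧ y = 0
      · refine ⟨Sum.inr 0, ?_⟩
        obtain ⟨rfl, rfl⟩ := h0
        simp [hexG]
      · refine ⟨Sum.inl ⟨(if y = 0 then x else x + 1, 2 * y + 1), ?_⟩, ?_⟩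
        · rw [mem_hexVerts']; simp only [hexVertex]; split_ifs <;> omega
        · simp only [hexG, Sum.elim_inl, hexF]
          rw [dif_pos (by omega)]
          simp only [Sum.inl.injEq, Prod.mk.injEq, Fin.mk.injEq]
          split_ifs <;> omega
    · by_cases h0 : x = m ∧ y = n
      · refine ⟨Sum.inr 1, ?_⟩
        obtain ⟨rfl, rfl⟩ := h0
        simp [hexG, Fin.ext_iff]
      · refine ⟨Sum.inl ⟨(x + 1, 2 * y + 2), ?_⟩, ?_⟩
        · rw [mem_hexVerts']; simp only [hexVertex]; omega
        · simp only [hexG, Sum.elim_inl, hexF]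
          rw [dif_neg (by omega)]
          simp only [Sum.inr.injEq, Prod.mk.injEq, Fin.mk.injEq]
          omega

theorem hexAdj_oo (n : ℕ) (i j i' j' : ℕ) (h : j % 2 = j' % 2) :
    ¬ hexAdj n (i, j) (i', j') := by
  simp only [hexAdj]
  rintro (h | ⟨_, h | ⟨k, h⟩⟩ | ⟨_, h | ⟨k, h⟩⟩) <;> omega

theorem hexAdj_symm' (n : ℕ) (p q : ℕ × ℕ) : hexAdj n p q ↔ hexAdj n q p := by
  simp only [hexAdj]
  constructor <;> rintro (h | h | h)
  · left; omega
  · right; right; exact h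
  · right; left; exact h
  · left; omega
  · right; right; exact h
  · right; left; exact h

/-- The doubled matrix. -/
def hexM (n m : ℕ) := Matrix.fromBlocks 0 (hexW m n) (hexW m n).transpose 0

theorem hexM_oe (n m : ℕ) (i j i' j' : ℕ) (hp : (i, j) ∈ hexVerts n m)
    (hq : (i', j') ∈ hexVerts n m) (hj : j % 2 = 1) (hj' : ¬ j' % 2 = 1) :
    hexM n m (hexF n m ⟨(i, j), hp⟩) (hexF n m ⟨(i', j'), hq⟩) =
      hexMatrix n m ⟨(i, j), hp⟩ ⟨(i', j'), hq⟩ := by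
  have hp' := hp
  have hq' := hq
  rw [mem_hexVerts'] at hp' hq'
  simp only [hexVertex] at hp' hq'
  simp only [hexF, dif_pos hj, dif_neg hj', hexM, Matrix.fromBlocks_apply₁₂, hexW_apply, hexU,
    hexMatrix]
  rw [if_neg (show ¬ ((if j = 1 then i else i - 1) = 0 ∧ j / 2 = 0) by split_ifs <;> omega)]
  congr 1
  rw [eq_iff_iff]
  simp only [hexAdj]
  by_cases h1 : j = 1
  · subst h1
    simp only [if_true]
    constructor
    · intro h
      by_cases hii : i = i'
      · left; omega
      · right; right; refine ⟨by omega, Or.inl ⟨by first | rfl | trivial, by omega⟩⟩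
    · rintro (h | ⟨_, h | ⟨k, h⟩⟩ | ⟨_, h | ⟨k, h⟩⟩) <;> omega
  · simp only [if_neg h1]
    constructor
    · intro h
      by_cases hii : i = i'
      · left; omega
      · right; left; refine ⟨by omega, Or.inr ⟨j / 2, by omega⟩⟩
    · rintro (h | ⟨_, h | ⟨k, h⟩⟩ | ⟨_, h | ⟨k, h⟩⟩) <;> omega

theorem hexM_symm (n m : ℕ) (x y) : hexM n m x y = hexM n m y x := by
  rcases x with x | x <;> rcases y with y | y <;> simp [hexM]

theorem hexMatrix_symm (n m : ℕ) (x y) : hexMatrix n m x y = hexMatrix n m y x := by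
  simp only [hexMatrix]
  congr 1
  exact propext (hexAdj_symm' n x.1 y.1)

theorem hexM_hexF (n m : ℕ) (p q) :
    hexM n m (hexF n m p) (hexF n m q) = hexMatrix n m p q := by
  obtain ⟨⟨i, j⟩, hp⟩ := p
  obtain ⟨⟨i', j'⟩, hq⟩ := q
  by_cases hj : j % 2 = 1 <;> by_cases hj' : j' % 2 = 1
  · simp only [hexF, dif_pos hj, dif_pos hj', hexM, Matrix.fromBlocks_apply₁₁, hexMatrix]
    rw [if_neg (hexAdj_oo _ _ _ _ _ (by omega))]; rfl
  · exact hexM_oe n m i j i' j' hp hq hj hj'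
  · rw [hexM_symm, hexMatrix_symm]
    exact hexM_oe n m i' j' i j hq hp hj' hj
  · simp only [hexF, dif_neg hj, dif_neg hj', hexM, Matrix.fromBlocks_apply₂₂, hexMatrix]
    rw [if_neg (hexAdj_oo _ _ _ _ _ (by omega))]; rfl

theorem hexM_zero (n m : ℕ) (p) : hexM n m (Sum.inl (0, 0)) (hexF n m p) = 0 := by
  obtain ⟨⟨i, j⟩, hp⟩ := p
  have hp' := hp
  rw [mem_hexVerts'] at hp'
  simp only [hexVertex] at hp'
  by_cases hj : j % 2 = 1
  · simp [hexF, hj, hexM]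
  · simp only [hexF, dif_neg hj, hexM, Matrix.fromBlocks_apply₁₂, hexW_apply]
    rw [if_pos (by simp), if_neg (by omega)]

theorem hexM_det_eq (n m : ℕ) : (hexM n m).det = - (hexMatrix n m).det := by
  let e := Equiv.ofBijective _ (hexG_bij n m)
  rw [← Matrix.det_submatrix_equiv_self e (hexM n m)]
  set S := (hexM n m).submatrix e e with hS
  have hA : S.toBlocks₁₁ = hexMatrix n m := by
    ext p q; exact hexM_hexF n m p q
  have hD : S.toBlocks₂₂ = !![0, 1; 1, 0] := by
    ext x y
    fin_cases x <;> fin_cases y <;>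
      simp [hS, Matrix.toBlocks₂₂, e, hexG, hexM, hexW_apply]
  have hC : ∀ q, S.toBlocks₂₁ 0 q = 0 := fun q => hexM_zero n m q
  have hB : ∀ q, S.toBlocks₁₂ q 0 = 0 := fun q => (hexM_symm n m _ _).trans (hexM_zero n m q)
  have hDD : (!![0, 1; 1, 0] : Matrix (Fin 2) (Fin 2) ℝ) * !![0, 1; 1, 0] = 1 := by
    ext x y; fin_cases x <;> fin_cases y <;> simp [Matrix.mul_apply]
  letI : Invertible (!![0, 1; 1, 0] : Matrix (Fin 2) (Fin 2) ℝ) := ⟨!![0, 1; 1, 0], hDD, hDD⟩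
  rw [← Matrix.fromBlocks_toBlocks S, hA, hD, Matrix.det_fromBlocks₂₂]
  have h0 : S.toBlocks₁₂ * ⅟(!![0, 1; 1, 0] : Matrix (Fin 2) (Fin 2) ℝ) * S.toBlocks₂₁ = 0 := by
    change S.toBlocks₁₂ * !![0, 1; 1, 0] * S.toBlocks₂₁ = 0
    ext p q
    simp [Matrix.mul_apply, Fin.sum_univ_two, hB, hC]
  rw [h0]
  simp [Matrix.det_fin_two]

/-- **Theorem 3**.  For all integers `k, n ≥ 1`, the determinant of the adjacency matrix
of the hexagonal grid `H_{n,k}` equals `(-1)^(kn+n+k) * (n+k choose n)²`. -/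
theorem det_hexagonal_grid (k n : ℕ) (hk : 1 ≤ k) (hn : 1 ≤ n) :
    (hexMatrix n k).det =
      (-1 : ℝ) ^ (k * n + n + k) * ((n + k).choose n : ℝ) ^ 2 := by
  have h1 := hexM_det_eq n k
  rw [hexM, hexaux_det_swap, hexW_det] at h1
  rw [← neg_eq_iff_eq_neg] at h1
  rw [← h1, mul_pow, ← pow_mul, mul_comm (k + n) 2, pow_mul, add_comm n k]
  simp only [Fintype.card_prod, Fintype.card_fin]
  rw [show (k + 1) * (n + 1) = (k * n + n + k) + 1 by ring, pow_succ]
  norm_num
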